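/- The sequence of correlation gaps of the series example converges: lim_{n → ∞} (1 + (n−1)/2) / (n·(1 − (1 − 1/n)^n)) = (1/2) · e/(e − 1) ≈ 0.791, where e is Euler's number. -/

import Mathlib

open scoped BigOperators

namespace CorrIM

variable {V : Type*} [Fintype V] [DecidableEq V]

/-- A node `i` is influenced: `i ∈ S`, or `i` is reachable from some node of `S`
along the live edges of the scenario `c`. -/
def influenced (c : Finset (V × V)) (S : Finset V) (i : V) : Prop :=
  ∃ s ∈ S, Relation.ReflTransGen (fun a b : V => (a, b) ∈ c) s i

/-- `R c S` : the number of influenced nodes in scenario `c` with seed set `S`. -/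
noncomputable def R (c : Finset (V × V)) (S : Finset V) : ℕ :=
  Set.ncard {i : V | influenced c S i}

/-- The Fréchet class `Θ` : probability distributions on scenarios (subsets of `E`)
whose marginals agree with the edge likelihoods `p`. -/
def memTheta (E : Finset (V × V)) (p : V × V → ℝ) (θ : Finset (V × V) → ℝ) : Prop :=
  (∀ c, 0 ≤ θ c) ∧ (∀ c, θ c ≠ 0 → c ⊆ E) ∧ (∑ c : Finset (V × V), θ c) = 1 ∧
    ∀ e ∈ E, (∑ c : Finset (V × V), if e ∈ c then θ c else 0) = p e

/-- Expected number of influenced nodes under the distribution `θ`. -/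
noncomputable def expInf (θ : Finset (V × V) → ℝ) (S : Finset V) : ℝ :=
  ∑ c : Finset (V × V), θ c * (R c S : ℝ)

/-- The correlation robust influence function `f^corr`. -/
noncomputable def fcorr (E : Finset (V × V)) (p : V × V → ℝ) (S : Finset V) : ℝ :=
  sInf {x : ℝ | ∃ θ, memTheta E p θ ∧ x = expInf θ S}

open Classical in
/-- Probability of the event `A` under the distribution `θ`. -/
noncomputable def prob (θ : Finset (V × V) → ℝ) (A : Finset (V × V) → Prop) : ℝ :=
  ∑ c : Finset (V × V), if A c then θ c else 0

/-- `γ` (a list of nodes `i₀, i₁, …, i_λ`, `λ ≥ 1`) is a directed path from the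
seed set `S` to the node `i` using edges of `E`. -/
def IsPathFrom (E : Finset (V × V)) (S : Finset V) (i : V) (γ : List V) : Prop :=
  2 ≤ γ.length ∧ (∃ s ∈ S, γ.head? = some s) ∧ γ.getLast? = some i ∧
    γ.Chain' (fun a b : V => (a, b) ∈ E)

/-- The list of edges `(i₀,i₁), …, (i_{λ-1}, i_λ)` of a path `γ = [i₀, …, i_λ]`. -/
def pathEdges (γ : List V) : List (V × V) := γ.zip γ.tail

/-- The weight `L(γ) = 1 - ∑_{l=1}^{λ} (1 - p(i_{l-1}, i_l))` of a path. -/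
noncomputable def L (p : V × V → ℝ) (γ : List V) : ℝ :=
  1 - ((pathEdges γ).map (fun e => 1 - p e)).sum

/-- `π*_i = max(0, max_{γ ∈ Γ(S,i)} L(γ))`, with value `0` when `Γ(S,i) = ∅`. -/
noncomputable def piStar (E : Finset (V × V)) (p : V × V → ℝ) (S : Finset V) (i : V) : ℝ :=
  sSup (insert 0 {x : ℝ | ∃ γ : List V, IsPathFrom E S i γ ∧ x = L p γ})

/-- The independent cascade distribution `θ_ic` : each edge of `E` is live
independently with probability `p e`. -/
noncomputable def thetaIC (E : Finset (V × V)) (p : V × V → ℝ) (c : Finset (V × V)) : ℝ :=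
  if c ⊆ E then (∏ e ∈ c, p e) * ∏ e ∈ E \ c, (1 - p e) else 0

/-- The independent cascade influence function `f^ic`. -/
noncomputable def fic (E : Finset (V × V)) (p : V × V → ℝ) (S : Finset V) : ℝ :=
  expInf (thetaIC E p) S

/-!
Divide numerator and denominator by `n`: the numerator `(n + 1) / (2n)` tends to `1 / 2`, and the
denominator `1 - (1 - 1/n)^n` tends to `1 - e⁻¹`, whose reciprocal is `e / (e - 1)`.
-/

section Limits

open Filter Topology

theorem tendsto_one_sub_div_pow_exp_neg (t : ℝ) :
    Tendsto (fun n : ℕ => (1 - t / n) ^ n) atTop (𝓝 (Real.exp (-t))) := by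
  simpa only [neg_div, ← sub_eq_add_neg] using Real.tendsto_one_add_div_pow_exp (-t)

/-- At `t = 0` both sides are `0` because division by zero gives zero. -/
theorem inv_one_sub_exp_neg (t : ℝ) :
    (1 - Real.exp (-t))⁻¹ = Real.exp t / (Real.exp t - 1) := by
  have exp_sub_one_eq : Real.exp t - 1 = Real.exp t * (1 - Real.exp (-t)) := by
    rw [mul_one_sub, ← Real.exp_add, add_neg_cancel, Real.exp_zero]
  rw [exp_sub_one_eq, div_mul_cancel_left₀ (Real.exp_ne_zero t)]

theorem tendsto_inv_one_sub_one_sub_div_pow {t : ℝ} (ht : t ≠ 0) :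
    Tendsto (fun n : ℕ => (1 - (1 - t / n) ^ n)⁻¹) atTop
      (𝓝 (Real.exp t / (Real.exp t - 1))) := by
  have limit_ne_zero : 1 - Real.exp (-t) ≠ 0 := by
    rwa [sub_ne_zero, ne_comm, Ne, Real.exp_eq_one_iff, neg_eq_zero]
  rw [← inv_one_sub_exp_neg]
  exact ((tendsto_one_sub_div_pow_exp_neg t).const_sub 1).inv₀ limit_ne_zero

theorem tendsto_add_sub_one_mul_div_natCast {𝕜 : Type*} [Field 𝕜] [CharZero 𝕜]
    [TopologicalSpace 𝕜] [ContinuousSMul ℚ≥0 𝕜] [IsTopologicalSemiring 𝕜] [ContinuousInv₀ 𝕜]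
    (a d : 𝕜) :
    Tendsto (fun n : ℕ => (a + ((n : 𝕜) - 1) * d) / n) atTop (𝓝 d) := by
  have affine := tendsto_add_mul_div_add_mul_atTop_nhds (a - d) 0 d (one_ne_zero (α := 𝕜))
  rw [div_one] at affine
  refine affine.congr fun n => ?_
  ring

end Limits

/-- the correlation gaps of the series example converge:
`lim_{n → ∞} (1 + (n-1)/2) / (n (1 - (1 - 1/n)^n)) = (1/2) ⬝ e/(e-1)`. -/
theorem series_correlation_gap_limit :
    Filter.Tendsto
      (fun n : ℕ => (1 + ((n : ℝ) - 1) / 2) / ((n : ℝ) * (1 - (1 - 1 / (n : ℝ)) ^ n)))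
      Filter.atTop (nhds (1 / 2 * (Real.exp 1 / (Real.exp 1 - 1)))) := by
  have numerator := tendsto_add_sub_one_mul_div_natCast (1 : ℝ) (1 / 2)
  have denominator_inv := tendsto_inv_one_sub_one_sub_div_pow (one_ne_zero (α := ℝ))
  refine (numerator.mul denominator_inv).congr fun n => ?_
  rw [mul_one_div, ← div_eq_mul_inv, div_div]

end CorrIM
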